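/- (Leibniz type rule for the Chen derivative.) Let 0 < α < 1 and c < b. Suppose f, g : ℝ → ℝ are real-analytic with everywhere-convergent power series. Then for every x ∈ (c,b): (^{EN}D^{α}_{c}(f·g))(x) = Σ_{m=0}^∞ binom(α, m) f⁽ᵐ⁾(x) (^{EN}D^{α−m}_{c} g)(x), where f⁽ᵐ⁾ is the ordinary m-th derivative of f and the series converges. -/

import Mathlib

open Real

/-- Generalized binomial coefficient `binom(γ, n) = γ(γ-1)⋯(γ-n+1)/n!`. -/
noncomputable def genBinom (γ : ℝ) (n : ℕ) : ℝ :=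
  (∏ i ∈ Finset.range n, (γ - (i : ℝ))) / (n.factorial : ℝ)

/-- Ψ-Riemann–Liouville fractional integral of order `α` with base point `a`;
by convention the order-0 integral is the identity. -/
noncomputable def psiI (a : ℝ) (Ψ f : ℝ → ℝ) (α : ℝ) (x : ℝ) : ℝ :=
  if α = 0 then f x
  else (Real.Gamma α)⁻¹ * ∫ t in a..x, deriv Ψ t * (Ψ x - Ψ t) ^ (α - 1) * f t

/-- Ψ-Riemann–Liouville fractional derivative of order `γ` (for `γ ≤ 0` it is the
fractional integral of order `-γ`, the order-0 case being the identity). -/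
noncomputable def psiRLD (a : ℝ) (Ψ f : ℝ → ℝ) (γ : ℝ) (x : ℝ) : ℝ :=
  if γ ≤ 0 then psiI a Ψ f (-γ) x
  else (deriv Ψ x)⁻¹ * deriv (fun y => psiI a Ψ f (1 - γ) y) x

/-- Ψ-Caputo fractional derivative of order `γ` (for `γ ≤ 0` it is the
fractional integral of order `-γ`). -/
noncomputable def psiCD (a : ℝ) (Ψ f : ℝ → ℝ) (γ : ℝ) (x : ℝ) : ℝ :=
  if γ ≤ 0 then psiI a Ψ f (-γ) x
  else psiI a Ψ (fun t => (deriv Ψ t)⁻¹ * deriv f t) (1 - γ) x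

/-- Ψ-Hilfer fractional derivative of order `α` and type `β`. -/
noncomputable def psiHD (a : ℝ) (Ψ f : ℝ → ℝ) (α β : ℝ) (x : ℝ) : ℝ :=
  psiI a Ψ
    (fun y => (deriv Ψ y)⁻¹ * deriv (fun z => psiI a Ψ f ((1 - β) * (1 - α)) z) y)
    (β * (1 - α)) x

/-- Classical Riemann–Liouville fractional integral with base point `a`. -/
noncomputable def rlI (a : ℝ) (α : ℝ) (f : ℝ → ℝ) (x : ℝ) : ℝ :=
  if α = 0 then f x
  else (Real.Gamma α)⁻¹ * ∫ t in a..x, (x - t) ^ (α - 1) * f t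

/-- Classical Riemann–Liouville fractional derivative (fractional integral for `γ ≤ 0`). -/
noncomputable def rlD (a : ℝ) (γ : ℝ) (f : ℝ → ℝ) (x : ℝ) : ℝ :=
  if γ ≤ 0 then rlI a (-γ) f x
  else deriv (fun y => rlI a (1 - γ) f y) x

/-- Classical Caputo fractional derivative (fractional integral for `γ ≤ 0`). -/
noncomputable def capD (a : ℝ) (γ : ℝ) (f : ℝ → ℝ) (x : ℝ) : ℝ :=
  if γ ≤ 0 then rlI a (-γ) f x
  else rlI a (1 - γ) (deriv f) x

/-- Classical Hilfer fractional derivative of order `α` and type `β`. -/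
noncomputable def hilD (a : ℝ) (α β : ℝ) (f : ℝ → ℝ) (x : ℝ) : ℝ :=
  rlI a (β * (1 - α))
    (fun y => deriv (fun z => rlI a ((1 - β) * (1 - α)) f z) y) x

/-- Hadamard fractional integral with base point `a`. -/
noncomputable def hadI (a : ℝ) (α : ℝ) (f : ℝ → ℝ) (x : ℝ) : ℝ :=
  if α = 0 then f x
  else (Real.Gamma α)⁻¹ * ∫ t in a..x, (Real.log x - Real.log t) ^ (α - 1) * f t / t

/-- Caputo–Hadamard fractional derivative (Hadamard fractional integral for `γ ≤ 0`). -/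
noncomputable def chD (a : ℝ) (γ : ℝ) (f : ℝ → ℝ) (x : ℝ) : ℝ :=
  if γ ≤ 0 then hadI a (-γ) f x
  else hadI a (1 - γ) (fun t => t * deriv f t) x

/-- `h` is real-analytic with a power series converging on all of `ℝ`. -/
def EntireReal (h : ℝ → ℝ) : Prop :=
  ∃ p : FormalMultilinearSeries ℝ ℝ ℝ, HasFPowerSeriesOnBall h p 0 ⊤

/-
Write `D^γ = rlD c γ` and `I^β = rlI c β = D^{-β}`. Splitting `t - x = (y - x) - (y - t)` under the
integral gives `I^β ((· - x) k) y = (y - x) I^β k y - β I^{β+1} k y`.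

At `y = x` this iterates to `I^β ((· - x)^n k) x = n! binom(-β, n) I^{β+n} k x`; expanding `f` in
its Taylor series at `x` and integrating termwise yields the rule for the orders `-β ≤ 0`.

Near `y = x` it shows that `I^β ((· - x) k)` has derivative `(1 - β) I^β k x` at `x`, because
`I^{β+1} k` is a primitive of `I^β k`. With `f = f x + (· - x) · dslope f x` and `β = 1 - α` this
gives `D^α (f g) x = f x D^α g x + α D^{α-1} (dslope f x · g) x`, and the rule for the order
`α - 1 ≤ 0` expands the last term, with `α binom(α - 1, n) = (n + 1) binom(α, n + 1)`.
-/

open MeasureTheory Set Filter Topology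

section Binomial

lemma genBinom_zero_right (γ : ℝ) : genBinom γ 0 = 1 := by
  simp [genBinom]

lemma succ_mul_genBinom_succ (γ : ℝ) (n : ℕ) :
    (n + 1) * genBinom γ (n + 1) = γ * genBinom (γ - 1) n := by
  have hprod : ∏ i ∈ Finset.range n, (γ - 1 - (i : ℝ)) =
      ∏ i ∈ Finset.range n, (γ - ((i + 1 : ℕ) : ℝ)) :=
    Finset.prod_congr rfl fun i _ ↦ by push_cast; ring
  rw [genBinom, genBinom, Finset.prod_range_succ', ← hprod, Nat.factorial_succ]
  push_cast
  field_simp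
  ring

end Binomial

section FractionalIntegral

variable {c b x y β : ℝ} {f g k : ℝ → ℝ}

lemma rlI_zero (c : ℝ) (k : ℝ → ℝ) : rlI c 0 k = k := by
  ext; simp [rlI]

lemma rlI_of_ne_zero (hβ : β ≠ 0) (c : ℝ) (k : ℝ → ℝ) (y : ℝ) :
    rlI c β k y = (Gamma β)⁻¹ * ∫ t in c..y, (y - t) ^ (β - 1) * k t :=
  if_neg hβ

lemma rlD_of_nonpos {γ : ℝ} (hγ : γ ≤ 0) (c : ℝ) (k : ℝ → ℝ) (y : ℝ) :
    rlD c γ k y = rlI c (-γ) k y :=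
  if_pos hγ

lemma rlD_of_pos {γ : ℝ} (hγ : 0 < γ) (c : ℝ) (k : ℝ → ℝ) (y : ℝ) :
    rlD c γ k y = deriv (rlI c (1 - γ) k) y :=
  if_neg hγ.not_ge

lemma intervalIntegrable_sub_rpow (hβ : 0 < β) :
    IntervalIntegrable (fun t ↦ (y - t) ^ (β - 1)) volume c y := by
  have h : IntervalIntegrable (fun u : ℝ ↦ u ^ (β - 1)) volume (y - c) (y - y) :=
    intervalIntegral.intervalIntegrable_rpow' (by linarith)
  simpa only [sub_sub_cancel] using h.comp_sub_left y

lemma intervalIntegrable_sub_rpow_mul (hβ : 0 < β) (hcy : c ≤ y) (hk : ContinuousOn k (Icc c y)) :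
    IntervalIntegrable (fun t ↦ (y - t) ^ (β - 1) * k t) volume c y :=
  (intervalIntegrable_sub_rpow hβ).mul_continuousOn (by rwa [uIcc_of_le hcy])

lemma rlI_const_mul (a : ℝ) : rlI c β (fun t ↦ a * k t) y = a * rlI c β k y := by
  rcases eq_or_ne β 0 with rfl | hβ
  · simp only [rlI_zero]
  · simp only [rlI_of_ne_zero hβ, mul_left_comm _ a, intervalIntegral.integral_const_mul]

lemma rlI_add (hβ : 0 ≤ β) (hcy : c ≤ y) (hf : ContinuousOn f (Icc c y))
    (hg : ContinuousOn g (Icc c y)) :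
    rlI c β (fun t ↦ f t + g t) y = rlI c β f y + rlI c β g y := by
  rcases hβ.eq_or_lt with rfl | hβ
  · simp only [rlI_zero]
  · simp only [rlI_of_ne_zero hβ.ne', mul_add]
    rw [intervalIntegral.integral_add (intervalIntegrable_sub_rpow_mul hβ hcy hf)
      (intervalIntegrable_sub_rpow_mul hβ hcy hg), mul_add]

lemma rlI_sub_mul (hβ : 0 ≤ β) (hcy : c ≤ y) (hk : ContinuousOn k (Icc c y)) (x : ℝ) :
    rlI c β (fun t ↦ (t - x) * k t) y = (y - x) * rlI c β k y - β * rlI c (β + 1) k y := by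
  rcases hβ.eq_or_lt with rfl | hβ
  · simp only [rlI_zero, zero_mul, sub_zero]
  have hsplit : ∫ t in c..y, (y - t) ^ (β - 1) * ((t - x) * k t) =
      (y - x) * (∫ t in c..y, (y - t) ^ (β - 1) * k t) -
        ∫ t in c..y, (y - t) ^ (β + 1 - 1) * k t := by
    rw [← intervalIntegral.integral_const_mul, ← intervalIntegral.integral_sub
      ((intervalIntegrable_sub_rpow_mul hβ hcy hk).const_mul _)
      (intervalIntegrable_sub_rpow_mul (by linarith) hcy hk)]
    refine intervalIntegral.integral_congr fun t ht ↦ ?_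
    rw [uIcc_of_le hcy] at ht
    have hpow : (y - t) ^ (β + 1 - 1) = (y - t) ^ (β - 1) * (y - t) := by
      rw [← rpow_add_one' (by linarith [ht.2]) (by linarith)]
      ring_nf
    simp only [hpow]
    ring
  rw [rlI_of_ne_zero hβ.ne', rlI_of_ne_zero hβ.ne', rlI_of_ne_zero (by linarith), hsplit,
    Gamma_add_one hβ.ne']
  field_simp

lemma rlI_sub_pow_mul (hβ : 0 ≤ β) (hcx : c ≤ x) (hk : ContinuousOn k (Icc c x)) (n : ℕ) :
    rlI c β (fun t ↦ (t - x) ^ n * k t) x =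
      n.factorial * genBinom (-β) n * rlI c (β + n) k x := by
  induction n generalizing β with
  | zero => simp [genBinom_zero_right]
  | succ n ih =>
    have hpow : (fun t ↦ (t - x) ^ (n + 1) * k t) = fun t ↦ (t - x) * ((t - x) ^ n * k t) := by
      ext t
      ring
    rw [hpow, rlI_sub_mul hβ hcx (by fun_prop), ih (β := β + 1) (by linarith), sub_self,
      zero_mul, zero_sub, show -(β + 1) = -β - 1 by ring, Nat.factorial_succ]
    have hbinom := succ_mul_genBinom_succ (-β) n
    push_cast
    rw [show β + 1 + (n : ℝ) = β + (n + 1) by ring]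
    linear_combination -(n.factorial * rlI c (β + (n + 1)) k x) * hbinom

lemma rlI_eq_integral_zero_one (hβ : 0 < β) (hcy : c ≤ y) (k : ℝ → ℝ) :
    rlI c β k y = (Gamma β)⁻¹ *
      ((y - c) ^ β * ∫ s in (0 : ℝ)..1, (1 - s) ^ (β - 1) * k (c + (y - c) * s)) := by
  rw [rlI_of_ne_zero hβ.ne']
  congr 1
  have hsubst := intervalIntegral.smul_integral_comp_add_mul (a := 0) (b := 1)
    (fun t ↦ (y - t) ^ (β - 1) * k t) (y - c) c
  simp only [mul_zero, add_zero, mul_one, add_sub_cancel] at hsubst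
  rw [← hsubst, smul_eq_mul, ← intervalIntegral.integral_const_mul,
    ← intervalIntegral.integral_const_mul]
  refine intervalIntegral.integral_congr fun s hs ↦ ?_
  rw [uIcc_of_le zero_le_one] at hs
  have hpow : (y - c) ^ β = (y - c) ^ (β - 1) * (y - c) := by
    rw [← rpow_add_one' (by linarith) (by linarith), sub_add_cancel]
  rw [show y - (c + (y - c) * s) = (y - c) * (1 - s) by ring,
    mul_rpow (by linarith) (by linarith [hs.2]), hpow]
  ring

lemma continuousOn_rlI (hβ : 0 ≤ β) (hk : ContinuousOn k (Icc c b)) :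
    ContinuousOn (rlI c β k) (Icc c b) := by
  rcases hβ.eq_or_lt with rfl | hβ
  · rwa [rlI_zero]
  have hmem : ∀ y ∈ Icc c b, ∀ s ∈ Icc (0 : ℝ) 1, c + (y - c) * s ∈ Icc c b := fun y hy s hs ↦
    ⟨by nlinarith [hy.1, hs.1], by nlinarith [hy.1, hy.2, hs.2]⟩
  obtain ⟨M, hM⟩ := isCompact_Icc.exists_bound_of_continuousOn hk
  have hint : ContinuousOn
      (fun y ↦ ∫ s in (0 : ℝ)..1, (1 - s) ^ (β - 1) * k (c + (y - c) * s)) (Icc c b) := by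
    simp only [intervalIntegral.integral_of_le zero_le_one]
    refine continuousOn_of_dominated (bound := fun s ↦ (1 - s) ^ (β - 1) * M)
      (fun y hy ↦ ?_) (fun y hy ↦ ?_) ?_ ?_
    · exact ((intervalIntegrable_sub_rpow_mul hβ zero_le_one
        (hk.comp (by fun_prop) (hmem y hy))).1).aestronglyMeasurable
    · filter_upwards [ae_restrict_mem measurableSet_Ioc] with s hs
      have hnonneg : 0 ≤ (1 - s) ^ (β - 1) := rpow_nonneg (by linarith [hs.2]) _
      rw [norm_mul, norm_of_nonneg hnonneg]
      exact mul_le_mul_of_nonneg_left (hM _ (hmem y hy s ⟨hs.1.le, hs.2⟩)) hnonneg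
    · exact ((intervalIntegrable_sub_rpow hβ).mul_const M).1
    · filter_upwards [ae_restrict_mem measurableSet_Ioc] with s hs
      exact continuousOn_const.mul
        (hk.comp (by fun_prop) fun y hy ↦ hmem y hy s ⟨hs.1.le, hs.2⟩)
  have hpow : ContinuousOn (fun y : ℝ ↦ (y - c) ^ β) (Icc c b) := by fun_prop (disch := grind)
  exact (continuousOn_const.mul (hpow.mul hint)).congr fun y hy ↦
    rlI_eq_integral_zero_one hβ hy.1 k

lemma integral_sub_rpow_eq (hβ : 0 < β) (t y : ℝ) :
    ∫ s in t..y, (s - t) ^ (β - 1) = (y - t) ^ β / β := by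
  rw [intervalIntegral.integral_comp_sub_right (fun u ↦ u ^ (β - 1)),
    integral_rpow (Or.inl (by linarith)), sub_self, sub_add_cancel, zero_rpow hβ.ne', sub_zero]

lemma integral_indicator_sub_rpow_eq {t : ℝ} (hβ : 0 < β) (ht : t ∈ Ioc c y) :
    ∫ s in c..y, (Ioc 0 (y - c)).indicator (fun u ↦ u ^ (β - 1)) (s - t) = (y - t) ^ β / β := by
  have hshift : (fun s ↦ (Ioc 0 (y - c)).indicator (fun u ↦ u ^ (β - 1)) (s - t)) =
      (Ioc t (t + (y - c))).indicator fun s ↦ (s - t) ^ (β - 1) := by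
    ext s
    simp only [indicator_apply, mem_Ioc]
    grind
  have hinter : Ioc c y ∩ Ioc t (t + (y - c)) = Ioc t y := by
    ext s
    grind
  rw [hshift, intervalIntegral.integral_of_le (ht.1.le.trans ht.2),
    setIntegral_indicator measurableSet_Ioc, hinter, ← intervalIntegral.integral_of_le ht.2,
    integral_sub_rpow_eq hβ]

lemma integral_integral_sub_rpow_mul (hβ : 0 < β) (hcy : c ≤ y)
    (hk : IntervalIntegrable k volume c y) :
    ∫ s in c..y, ∫ t in c..s, (s - t) ^ (β - 1) * k t =
      ∫ t in c..y, (y - t) ^ β / β * k t := by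
  -- Extended by zero off the triangle `c < t < s ≤ y`, the integrand is that of a convolution of
  -- integrable functions, which provides the integrability needed for Fubini.
  set p : ℝ → ℝ := (Ioc 0 (y - c)).indicator fun u ↦ u ^ (β - 1) with hp
  set q : ℝ → ℝ := (Ioc c y).indicator k with hq
  have hp_int : Integrable p := (integrable_indicator_iff measurableSet_Ioc).2
    (intervalIntegral.intervalIntegrable_rpow' (by linarith)).1
  have hq_int : Integrable q := (integrable_indicator_iff measurableSet_Ioc).2 hk.1
  have hqp_int : Integrable (Function.uncurry fun s t ↦ q t * p (s - t))
      ((volume.restrict (uIoc c y)).prod volume) :=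
    (hq_int.convolution_integrand (ContinuousLinearMap.mul ℝ ℝ) hp_int).mono_measure
      (Measure.prod_mono Measure.restrict_le_self le_rfl)
  have hinner : ∀ s ∈ Icc c y,
      ∫ t in c..s, (s - t) ^ (β - 1) * k t = ∫ t, q t * p (s - t) := fun s hs ↦ by
    rw [intervalIntegral.integral_of_le hs.1, integral_Ioc_eq_integral_Ioo,
      ← integral_indicator measurableSet_Ioo]
    congr 1 with t
    simp only [hp, hq, indicator_apply, mem_Ioo, mem_Ioc]
    grind
  have houter : ∀ t, ∫ s in c..y, q t * p (s - t) =
      (Ioc c y).indicator (fun t ↦ (y - t) ^ β / β * k t) t := fun t ↦ by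
    by_cases ht : t ∈ Ioc c y
    · rw [intervalIntegral.integral_const_mul, hp, integral_indicator_sub_rpow_eq hβ ht,
        indicator_of_mem ht, hq, indicator_of_mem ht, mul_comm]
    · simp [hq, indicator_of_notMem ht]
  calc ∫ s in c..y, ∫ t in c..s, (s - t) ^ (β - 1) * k t
      = ∫ s in c..y, ∫ t, q t * p (s - t) :=
        intervalIntegral.integral_congr fun s hs ↦ hinner s (by rwa [uIcc_of_le hcy] at hs)
    _ = ∫ t, ∫ s in c..y, q t * p (s - t) := intervalIntegral_integral_swap hqp_int
    _ = ∫ t in c..y, (y - t) ^ β / β * k t := by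
        simp only [houter]
        rw [integral_indicator measurableSet_Ioc, intervalIntegral.integral_of_le hcy]

lemma integral_rlI (hβ : 0 ≤ β) (hcy : c ≤ y) (hk : IntervalIntegrable k volume c y) :
    ∫ s in c..y, rlI c β k s = rlI c (β + 1) k y := by
  rcases hβ.eq_or_lt with rfl | hβ
  · simp [rlI_zero, rlI_of_ne_zero]
  simp only [rlI_of_ne_zero hβ.ne', rlI_of_ne_zero (add_pos hβ one_pos).ne',
    intervalIntegral.integral_const_mul, integral_integral_sub_rpow_mul hβ hcy hk,
    Gamma_add_one hβ.ne', add_sub_cancel_right, div_mul_eq_mul_div, intervalIntegral.integral_div]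
  field_simp

lemma hasDerivAt_rlI_add_one (hβ : 0 ≤ β) (hx : x ∈ Ioo c b) (hk : ContinuousOn k (Icc c b)) :
    HasDerivAt (rlI c (β + 1) k) (rlI c β k x) x := by
  have hcont := continuousOn_rlI hβ hk
  have hnhds : Icc c b ∈ 𝓝 x := Icc_mem_nhds hx.1 hx.2
  have hint : IntervalIntegrable (rlI c β k) volume c x :=
    (hcont.mono (Icc_subset_Icc_right hx.2.le)).intervalIntegrable_of_Icc hx.1.le
  have hderiv : HasDerivAt (fun y ↦ ∫ s in c..y, rlI c β k s) (rlI c β k x) x :=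
    intervalIntegral.integral_hasDerivAt_right hint
      ((hcont.mono Ioo_subset_Icc_self).stronglyMeasurableAtFilter isOpen_Ioo x hx)
      (hcont.continuousAt hnhds)
  refine hderiv.congr_of_eventuallyEq ?_
  filter_upwards [hnhds] with y hy
  exact (integral_rlI hβ hy.1
    ((hk.mono (Icc_subset_Icc_right hy.2)).intervalIntegrable_of_Icc hy.1)).symm

lemma hasDerivAt_sub_mul_of_continuousAt {u : ℝ → ℝ} (hu : ContinuousAt u x) :
    HasDerivAt (fun y ↦ (y - x) * u y) (u x) x := by
  rw [hasDerivAt_iff_tendsto_slope]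
  refine (hu.tendsto.mono_left nhdsWithin_le_nhds).congr' ?_
  filter_upwards [self_mem_nhdsWithin] with y hy
  rw [slope_def_field, sub_self, zero_mul, sub_zero, mul_div_cancel_left₀ _ (sub_ne_zero.2 hy)]

lemma hasDerivAt_rlI_sub_mul (hβ : 0 ≤ β) (hx : x ∈ Ioo c b) (hk : ContinuousOn k (Icc c b)) :
    HasDerivAt (rlI c β fun t ↦ (t - x) * k t) ((1 - β) * rlI c β k x) x := by
  have hnhds : Icc c b ∈ 𝓝 x := Icc_mem_nhds hx.1 hx.2
  have hderiv : HasDerivAt (fun y ↦ (y - x) * rlI c β k y - β * rlI c (β + 1) k y)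
      (rlI c β k x - β * rlI c β k x) x :=
    (hasDerivAt_sub_mul_of_continuousAt ((continuousOn_rlI hβ hk).continuousAt hnhds)).sub
      ((hasDerivAt_rlI_add_one hβ hx hk).const_mul β)
  refine (hderiv.congr_of_eventuallyEq ?_).congr_deriv (by ring)
  filter_upwards [hnhds] with y hy
  exact rlI_sub_mul hβ hy.1 (hk.mono (Icc_subset_Icc_right hy.2)) x

lemma rlI_eq_add_rlI_deriv {g' : ℝ → ℝ} (hβ : 0 < β) (hcy : c ≤ y)
    (hg : ContinuousOn g (Icc c y)) (hgg' : ∀ t ∈ Ioo c y, HasDerivAt g (g' t) t)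
    (hg' : ContinuousOn g' (Icc c y)) :
    rlI c β g y = (Gamma (β + 1))⁻¹ * ((y - c) ^ β * g c) + rlI c (β + 1) g' y := by
  have hpow_cont : Continuous fun t : ℝ ↦ (y - t) ^ β := by fun_prop (disch := grind)
  have hpow_deriv : ∀ t ∈ Ioo c y,
      HasDerivAt (fun t : ℝ ↦ (y - t) ^ β) (-β * (y - t) ^ (β - 1)) t := fun t ht ↦ by
    have := ((hasDerivAt_id t).const_sub y).rpow_const (p := β) (Or.inl (sub_pos.2 ht.2).ne')
    exact this.congr_deriv (by simp only [id_eq]; ring)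
  have hparts : ∫ t in c..y, (y - t) ^ β * g' t = (y - y) ^ β * g y - (y - c) ^ β * g c -
      ∫ t in c..y, -β * (y - t) ^ (β - 1) * g t :=
    intervalIntegral.integral_mul_deriv_eq_deriv_mul_of_hasDerivAt hpow_cont.continuousOn
      (by rwa [uIcc_of_le hcy]) (by simpa only [hcy, inf_of_le_left, sup_of_le_right])
      (by simpa only [hcy, inf_of_le_left, sup_of_le_right])
      ((intervalIntegrable_sub_rpow hβ).const_mul _) (hg'.intervalIntegrable_of_Icc hcy)
  simp only [mul_assoc, intervalIntegral.integral_const_mul, sub_self, zero_rpow hβ.ne'] at hparts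
  rw [rlI_of_ne_zero hβ.ne', rlI_of_ne_zero (by linarith), add_sub_cancel_right, hparts,
    Gamma_add_one hβ.ne']
  field_simp
  ring

lemma differentiableAt_rlI {g' : ℝ → ℝ} (hβ : 0 < β) (hx : x ∈ Ioo c b)
    (hg : ContinuousOn g (Icc c b)) (hgg' : ∀ t ∈ Ioo c b, HasDerivAt g (g' t) t)
    (hg' : ContinuousOn g' (Icc c b)) : DifferentiableAt ℝ (rlI c β g) x := by
  have hpow : DifferentiableAt ℝ (fun y : ℝ ↦ (y - c) ^ β) x :=
    (differentiableAt_id.sub_const c).rpow_const (Or.inl (sub_pos.2 hx.1).ne')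
  refine (((hpow.mul_const (g c)).const_mul (Gamma (β + 1))⁻¹).add
    (hasDerivAt_rlI_add_one hβ.le hx hg').differentiableAt).congr_of_eventuallyEq ?_
  filter_upwards [Icc_mem_nhds hx.1 hx.2] with y hy
  exact rlI_eq_add_rlI_deriv hβ hy.1 (hg.mono (Icc_subset_Icc_right hy.2))
    (fun t ht ↦ hgg' t (Ioo_subset_Ioo_right hy.2 ht)) (hg'.mono (Icc_subset_Icc_right hy.2))

end FractionalIntegral

section PowerSeries

variable {c x β : ℝ} {f g : ℝ → ℝ} {a : ℕ → ℝ}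

lemma hasSum_rlI_mul (hβ : 0 ≤ β) (hcx : c ≤ x) (hg : ContinuousOn g (Icc c x))
    (hf : ∀ t ∈ Icc c x, HasSum (fun n ↦ a n * (t - x) ^ n) (f t)) :
    HasSum (fun n ↦ rlI c β (fun t ↦ a n * ((t - x) ^ n * g t)) x)
      (rlI c β (fun t ↦ f t * g t) x) := by
  have hterms : ∀ t ∈ Icc c x, HasSum (fun n ↦ a n * ((t - x) ^ n * g t)) (f t * g t) :=
    fun t ht ↦ by simpa only [mul_assoc] using (hf t ht).mul_right (g t)
  rcases hβ.eq_or_lt with rfl | hβ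
  · simpa only [rlI_zero] using hterms x ⟨hcx, le_rfl⟩
  simp only [rlI_of_ne_zero hβ.ne']
  refine HasSum.mul_left _ (intervalIntegral.hasSum_integral_of_dominated_convergence
    (fun n t ↦ ‖a n * (c - x) ^ n‖ * ‖(x - t) ^ (β - 1) * g t‖) (fun n ↦ ?_) (fun n ↦ ?_)
    ?_ ?_ ?_)
  · exact (intervalIntegrable_sub_rpow_mul hβ hcx
      (by fun_prop)).aestronglyMeasurable_restrict_uIoc
  · refine Eventually.of_forall fun t ht ↦ ?_
    rw [uIoc_of_le hcx] at ht
    have hdist : ‖t - x‖ ≤ ‖c - x‖ := by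
      rw [norm_sub_rev, norm_sub_rev c, norm_of_nonneg (by linarith [ht.2]),
        norm_of_nonneg (by linarith)]
      linarith [ht.1]
    calc ‖(x - t) ^ (β - 1) * (a n * ((t - x) ^ n * g t))‖
        = ‖a n‖ * ‖t - x‖ ^ n * ‖(x - t) ^ (β - 1) * g t‖ := by
          simp only [norm_mul, norm_pow]; ring
      _ ≤ ‖a n * (c - x) ^ n‖ * ‖(x - t) ^ (β - 1) * g t‖ := by
          rw [norm_mul (a n), norm_pow]; gcongr
  · exact Eventually.of_forall fun t _ ↦ (hf c ⟨le_rfl, hcx⟩).summable.norm.mul_right _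
  · simp only [tsum_mul_right]
    exact (intervalIntegrable_sub_rpow_mul hβ hcx hg).norm.const_mul _
  · refine Eventually.of_forall fun t ht ↦ ?_
    rw [uIoc_of_le hcx] at ht
    exact (hterms t (Ioc_subset_Icc_self ht)).mul_left _

lemma hasSum_genBinom_mul_rlD_of_nonpos {γ : ℝ} (hγ : γ ≤ 0) (hcx : c ≤ x)
    (hg : ContinuousOn g (Icc c x)) (hf : ∀ t ∈ Icc c x, HasSum (fun n ↦ a n * (t - x) ^ n) (f t)) :
    HasSum (fun n : ℕ ↦ genBinom γ n * (n.factorial * a n) * rlD c (γ - n) g x)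
      (rlD c γ (fun t ↦ f t * g t) x) := by
  have hβ : 0 ≤ -γ := by linarith
  rw [rlD_of_nonpos hγ]
  convert hasSum_rlI_mul hβ hcx hg hf using 2 with n
  rw [rlI_const_mul, rlI_sub_pow_mul hβ hcx hg,
    rlD_of_nonpos (by linarith [n.cast_nonneg (α := ℝ)]), neg_neg, neg_sub, sub_eq_neg_add]
  ring

lemma hasSum_dslope {t : ℝ} (hfx : f x = a 0) (hfx' : deriv f x = a 1)
    (hf : HasSum (fun n ↦ a n * (t - x) ^ n) (f t)) :
    HasSum (fun n ↦ a (n + 1) * (t - x) ^ n) (dslope f x t) := by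
  rcases eq_or_ne t x with rfl | htx
  · rw [dslope_same, hfx']
    convert hasSum_single (f := fun n ↦ a (n + 1) * (t - t) ^ n) 0 fun n hn ↦ by simp [hn] using 1
    simp
  · have htail := ((hasSum_nat_add_iff' 1).2 hf).mul_right (t - x)⁻¹
    rw [dslope_of_ne f htx, slope_def_field, hfx]
    have htx' : t - x ≠ 0 := sub_ne_zero.2 htx
    simpa [pow_succ, mul_assoc, htx', div_eq_mul_inv] using htail

lemma hasSum_iteratedDeriv_mul_sub_pow {p : FormalMultilinearSeries ℝ ℝ ℝ} {r : ENNReal} {t : ℝ}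
    (hf : HasFPowerSeriesOnBall f p x r) (ht : t ∈ Metric.eball x r) :
    HasSum (fun n : ℕ ↦ iteratedDeriv n f x / n.factorial * (t - x) ^ n) (f t) := by
  have h := hf.hasSum_iteratedFDeriv (y := t - x) (by simpa [edist_eq_enorm_sub] using ht)
  simp only [iteratedFDeriv_apply_eq_iteratedDeriv_mul_prod, Finset.prod_const, Finset.card_univ,
    Fintype.card_fin, smul_eq_mul, add_sub_cancel] at h
  exact h.congr_fun fun n ↦ by ring

lemma hasSum_iteratedDeriv_succ_mul_sub_pow {p : FormalMultilinearSeries ℝ ℝ ℝ} {r : ENNReal}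
    {t : ℝ} (hf : HasFPowerSeriesOnBall f p x r) (ht : t ∈ Metric.eball x r) :
    HasSum (fun n : ℕ ↦ iteratedDeriv (n + 1) f x / (n + 1).factorial * (t - x) ^ n)
      (dslope f x t) :=
  hasSum_dslope (a := fun n ↦ iteratedDeriv n f x / n.factorial) (by simp) (by simp)
    (hasSum_iteratedDeriv_mul_sub_pow hf ht)

end PowerSeries

namespace EntireReal

variable {f : ℝ → ℝ}

lemma exists_hasFPowerSeriesOnBall (hf : EntireReal f) (x : ℝ) :
    ∃ p : FormalMultilinearSeries ℝ ℝ ℝ, HasFPowerSeriesOnBall f p x ⊤ := by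
  obtain ⟨p, hp⟩ := hf
  have h := hp.changeOrigin (y := x) (by simp)
  rw [zero_add, ENNReal.top_sub_coe] at h
  exact ⟨_, h⟩

lemma contDiff (hf : EntireReal f) {n : WithTop ℕ∞} : ContDiff ℝ n f := by
  obtain ⟨p, hp⟩ := hf
  simpa [contDiffOn_univ] using hp.analyticOnNhd.contDiffOn (n := n) (by simp)

end EntireReal

section Leibniz

variable {c b x α : ℝ} {f g : ℝ → ℝ}

lemma rlD_mul_eq_add_rlD_dslope_mul (hα0 : 0 < α) (hα1 : α ≤ 1) (hx : x ∈ Ioo c b)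
    (hf : ContinuousOn (dslope f x) (Icc c b)) (hg : ContinuousOn g (Icc c b))
    (hgx : DifferentiableAt ℝ (rlI c (1 - α) g) x) :
    rlD c α (fun t ↦ f t * g t) x =
      f x * rlD c α g x + α * rlD c (α - 1) (fun t ↦ dslope f x t * g t) x := by
  have hβ : 0 ≤ 1 - α := by linarith
  have hslope : ContinuousOn (fun t ↦ dslope f x t * g t) (Icc c b) := hf.mul hg
  have hfg : (fun t ↦ f t * g t) = fun t ↦ f x * g t + (t - x) * (dslope f x t * g t) := by
    ext t
    have := sub_smul_dslope f x t
    rw [smul_eq_mul] at this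
    linear_combination -g t * this
  have hderiv := (hgx.hasDerivAt.const_mul (f x)).add (hasDerivAt_rlI_sub_mul hβ hx hslope)
  rw [sub_sub_cancel] at hderiv
  rw [rlD_of_pos hα0, rlD_of_pos hα0, rlD_of_nonpos (by linarith), neg_sub, hfg]
  refine (hderiv.congr_of_eventuallyEq ?_).deriv
  filter_upwards [Icc_mem_nhds hx.1 hx.2] with y hy
  have hsub : Icc c y ⊆ Icc c b := Icc_subset_Icc_right hy.2
  have hgy := hg.mono hsub
  have hslopey := hslope.mono hsub
  rw [rlI_add hβ hy.1 (by fun_prop) (by fun_prop), rlI_const_mul, Pi.add_apply]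

theorem leibniz_Chen_general (hα : α ≤ 1) (hx : x ∈ Ioo c b)
    {p : FormalMultilinearSeries ℝ ℝ ℝ} {r : ENNReal} (hf : HasFPowerSeriesOnBall f p x r)
    (hr : Icc c b ⊆ Metric.eball x r) (hg : ContinuousOn g (Icc c b))
    (hgx : 0 < α → DifferentiableAt ℝ (rlI c (1 - α) g) x) :
    HasSum (fun m : ℕ ↦ genBinom α m * iteratedDeriv m f x * rlD c (α - m) g x)
      (rlD c α (fun t ↦ f t * g t) x) := by
  have hsub : Icc c x ⊆ Icc c b := Icc_subset_Icc_right hx.2.le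
  have hball : ∀ t ∈ Icc c x, t ∈ Metric.eball x r := fun t ht ↦ hr (hsub ht)
  rcases le_or_gt α 0 with hα0 | hα0
  · convert hasSum_genBinom_mul_rlD_of_nonpos hα0 hx.1.le (hg.mono hsub)
      (fun t ht ↦ hasSum_iteratedDeriv_mul_sub_pow hf (hball t ht)) using 3 with m
    rw [mul_div_cancel₀ _ (Nat.cast_ne_zero.2 m.factorial_ne_zero)]
  have hslope : ContinuousOn (dslope f x) (Icc c b) :=
    (continuousOn_dslope (Icc_mem_nhds hx.1 hx.2)).2
      ⟨hf.continuousOn.mono hr, hf.analyticAt.differentiableAt⟩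
  have htail := (hasSum_genBinom_mul_rlD_of_nonpos (sub_nonpos.2 hα) hx.1.le (hg.mono hsub)
    fun t ht ↦ hasSum_iteratedDeriv_succ_mul_sub_pow hf (hball t ht)).mul_left α
  have hsucc : HasSum
      (fun m : ℕ ↦ genBinom α (m + 1) * iteratedDeriv (m + 1) f x * rlD c (α - (m + 1 : ℕ)) g x)
      (α * rlD c (α - 1) (fun t ↦ dslope f x t * g t) x) := htail.congr_fun fun m ↦ by
    rw [show α - ((m + 1 : ℕ) : ℝ) = α - 1 - m by push_cast; ring, Nat.factorial_succ]
    push_cast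
    field_simp
    linear_combination
      iteratedDeriv (m + 1) f x * rlD c (α - 1 - m) g x * succ_mul_genBinom_succ α m
  rw [rlD_mul_eq_add_rlD_dslope_mul hα0 hα hx hslope hg (hgx hα0)]
  refine (hasSum_nat_add_iff' 1).1 ?_
  simpa [genBinom_zero_right] using hsucc

end Leibniz

/-- Leibniz type rule for the Chen fractional derivative with base
point `c` (the Riemann–Liouville derivative with base point `c`). -/
theorem leibniz_Chen
    (c b : ℝ) (hcb : c < b) (α : ℝ) (hα0 : 0 < α) (hα1 : α < 1)
    (f g : ℝ → ℝ) (hf : EntireReal f) (hg : EntireReal g)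
    (x : ℝ) (hx : x ∈ Set.Ioo c b) :
    HasSum
      (fun m : ℕ => genBinom α m * iteratedDeriv m f x * rlD c (α - m) g x)
      (rlD c α (fun t => f t * g t) x) := by
  obtain ⟨p, hp⟩ := hf.exists_hasFPowerSeriesOnBall x
  have hg1 : ContDiff ℝ 1 g := hg.contDiff
  refine leibniz_Chen_general hα1.le hx hp (by simp) hg1.continuous.continuousOn fun _ ↦ ?_
  exact differentiableAt_rlI (sub_pos.2 hα1) hx hg1.continuous.continuousOn
    (fun t _ ↦ (hg1.differentiable one_ne_zero t).hasDerivAt)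
    (hg1.continuous_deriv le_rfl).continuousOn
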